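/- arXiv:1208.0393 — 2 statements merged into one kernel-verified Lean document; each statement's English description precedes it below -/
import Mathlib

section
/- Let C be an (X,s)-neighbour transitive code with |C| ≥ 2 and minimum distance δ, and let i be an integer with i ≤ min(s, ⌊(δ−1)/2⌋). Then for every i-element subset I of Fin m, the setwise stabilizer X_I = {(g,σ) ∈ X : σ(I) = I} acts transitively on C. -/
/-!
Change the codeword `α` in exactly the coordinates of `I` to obtain a vertex `α'`, and likewise
change `β` to `β'`. Since `2 i < δ`, the codeword `α` is the only one within distance `i` of `α'`
(`eq_of_hammingDist_le`), so `α'` and `β'` lie in the cell `C_i` (`exists_neighbour`) and some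
`x = (g, σ) ∈ X` maps `α'` to `β'`. Because `C = C_0` is an `X`-orbit, `x` preserves `C`, and `x` is
an isometry, so `x α` is a codeword at distance `i` from `β'`, which forces `x α = β`. Finally `σ`
carries the set of coordinates where `α`, `α'` differ to the one where `β`, `β'` differ; both are
`I`, so `σ` fixes `I` setwise.
-/

namespace CTC

variable {m : ℕ} {Q : Type*}

/-- The automorphism of the Hamming graph `H(m,q)` given by the pair `(g, σ)`,
acting on a vertex `α` by `(α^x) i = (g (σ⁻¹ i)) (α (σ⁻¹ i))`. -/
def toPerm (g : Fin m → Equiv.Perm Q) (σ : Equiv.Perm (Fin m)) :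
    Equiv.Perm (Fin m → Q) :=
  (Equiv.piCongrRight g).trans (σ.arrowCongr (Equiv.refl Q))

@[simp] lemma toPerm_apply (g : Fin m → Equiv.Perm Q) (σ : Equiv.Perm (Fin m))
    (α : Fin m → Q) (i : Fin m) :
    toPerm g σ α i = g (σ⁻¹ i) (α (σ⁻¹ i)) := rfl

lemma toPerm_one : toPerm (fun _ : Fin m => (1 : Equiv.Perm Q)) 1 = 1 := by
  ext α i
  rfl

lemma toPerm_mul (g h : Fin m → Equiv.Perm Q) (σ τ : Equiv.Perm (Fin m)) :
    toPerm g σ * toPerm h τ = toPerm (fun j => g (τ j) * h j) (σ * τ) := by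
  ext α i
  simp [toPerm_apply, Equiv.Perm.mul_apply]

lemma toPerm_inv (g : Fin m → Equiv.Perm Q) (σ : Equiv.Perm (Fin m)) :
    (toPerm g σ)⁻¹ = toPerm (fun i => (g (σ⁻¹ i))⁻¹) σ⁻¹ := by
  rw [inv_eq_iff_mul_eq_one, toPerm_mul]
  have h1 : (fun j => g (σ⁻¹ j) * (g (σ⁻¹ j))⁻¹) = fun _ : Fin m => (1 : Equiv.Perm Q) := by
    funext j; simp
  have h2 : σ * σ⁻¹ = 1 := by simp
  rw [show (fun j => g ((σ⁻¹ : Equiv.Perm (Fin m)) j) * (g (σ⁻¹ j))⁻¹)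
      = fun _ : Fin m => (1 : Equiv.Perm Q) from h1, h2, toPerm_one]

/-- The automorphism group of the Hamming graph, as a subgroup of the
permutations of the vertex set. -/
def AutG (m : ℕ) (Q : Type*) : Subgroup (Equiv.Perm (Fin m → Q)) where
  carrier := {x | ∃ g σ, x = toPerm g σ}
  one_mem' := ⟨fun _ => 1, 1, toPerm_one.symm⟩
  mul_mem' := by
    rintro x y ⟨g, σ, rfl⟩ ⟨h, τ, rfl⟩
    exact ⟨_, _, toPerm_mul g h σ τ⟩
  inv_mem' := by
    rintro x ⟨g, σ, rfl⟩
    exact ⟨_, _, toPerm_inv g σ⟩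

/-- The base group `B` of `Aut(Γ)`: the automorphisms `(g, σ)` with `σ = 1`. -/
def BaseG (m : ℕ) (Q : Type*) : Subgroup (Equiv.Perm (Fin m → Q)) where
  carrier := {x | ∃ g, x = toPerm g 1}
  one_mem' := ⟨fun _ => 1, toPerm_one.symm⟩
  mul_mem' := by
    rintro x y ⟨g, rfl⟩ ⟨h, rfl⟩
    refine ⟨fun j => g j * h j, ?_⟩
    rw [toPerm_mul]
    simp
  inv_mem' := by
    rintro x ⟨g, rfl⟩
    refine ⟨fun i => (g i)⁻¹, ?_⟩
    rw [toPerm_inv]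
    simp

/-- The projection `μ(X)` of a subgroup `X ≤ Aut(Γ)` to the group of
permutations of the coordinates. -/
def ProjGroup (X : Subgroup (Equiv.Perm (Fin m → Q))) : Subgroup (Equiv.Perm (Fin m)) where
  carrier := {σ | ∃ g, toPerm g σ ∈ X}
  one_mem' := ⟨fun _ => 1, by rw [toPerm_one]; exact X.one_mem⟩
  mul_mem' := by
    rintro σ τ ⟨g, hg⟩ ⟨h, hh⟩
    exact ⟨fun j => g (τ j) * h j, by rw [← toPerm_mul]; exact X.mul_mem hg hh⟩
  inv_mem' := by
    rintro σ ⟨g, hg⟩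
    exact ⟨fun i => (g (σ⁻¹ i))⁻¹, by rw [← toPerm_inv]; exact X.inv_mem hg⟩

variable [DecidableEq Q]

/-- `d(γ, C)`: the distance from a vertex `γ` to the code `C`. -/
noncomputable def distTo (C : Set (Fin m → Q)) (γ : Fin m → Q) : ℕ :=
  sInf {d | ∃ β ∈ C, hammingDist γ β = d}

/-- `C_i`: the set of vertices at distance `i` from the code `C`. -/
def cell (C : Set (Fin m → Q)) (i : ℕ) : Set (Fin m → Q) :=
  {γ | distTo C γ = i}

/-- The covering radius `ρ` of the code `C`. -/
noncomputable def covRad (C : Set (Fin m → Q)) : ℕ :=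
  sSup {e | ∃ γ, distTo C γ = e}

/-- `S` is a single orbit of the subgroup `X`. -/
def IsOrbitOf (X : Subgroup (Equiv.Perm (Fin m → Q))) (S : Set (Fin m → Q)) : Prop :=
  ∃ γ, S = {β | ∃ x ∈ X, x γ = β}

/-- `C` is `(X,s)`-neighbour transitive: `C_i` is an `X`-orbit for `0 ≤ i ≤ s`. -/
def IsNT (C : Set (Fin m → Q)) (X : Subgroup (Equiv.Perm (Fin m → Q))) (s : ℕ) : Prop :=
  ∀ i ≤ s, IsOrbitOf X (cell C i)

/-- `C` is `X`-completely transitive: `C_i` is an `X`-orbit for `0 ≤ i ≤ ρ`. -/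
def IsCT (C : Set (Fin m → Q)) (X : Subgroup (Equiv.Perm (Fin m → Q))) : Prop :=
  IsNT C X (covRad C)

/-- `δ` is the minimum distance of the code `C`. -/
def IsMinDist (C : Set (Fin m → Q)) (δ : ℕ) : Prop :=
  IsLeast {d | ∃ α ∈ C, ∃ β ∈ C, α ≠ β ∧ hammingDist α β = d} δ

/-- The repetition code `Rep(m,q)`: the set of constant vertices. -/
def RepCode (m : ℕ) (Q : Type*) : Set (Fin m → Q) := {α | ∃ a, α = fun _ => a}

/-- Two codes are equivalent if one is the image of the other under an
automorphism of the Hamming graph. -/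
def CodeEquiv (C C' : Set (Fin m → Q)) : Prop :=
  ∃ x ∈ AutG m Q, ⇑x '' C = C'

/-- `Γ_k(γ)`: the set of vertices at Hamming distance `k` from `γ`. -/
def sphere (γ : Fin m → Q) (k : ℕ) : Set (Fin m → Q) := {β | hammingDist γ β = k}

/-- `C` is `s`-regular. -/
def IsSReg (C : Set (Fin m → Q)) (s : ℕ) : Prop :=
  ∀ i ≤ s, ∀ k ≤ m, ∀ γ₁ ∈ cell C i, ∀ γ₂ ∈ cell C i,
    (sphere γ₁ k ∩ C).ncard = (sphere γ₂ k ∩ C).ncard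

/-- `C` is completely regular. -/
def IsCR (C : Set (Fin m → Q)) : Prop := IsSReg C (covRad C)

end CTC

namespace CTC

/-- The action of `(g, σ)` moves the set of coordinates where two vertices differ by `σ`. -/
lemma diff_toPerm {m : ℕ} {Q : Type*} [DecidableEq Q] (g : Fin m → Equiv.Perm Q)
    (σ : Equiv.Perm (Fin m)) (α β : Fin m → Q) :
    Finset.univ.filter (fun j => toPerm g σ α j ≠ toPerm g σ β j)
      = (Finset.univ.filter (fun j => α j ≠ β j)).image σ := by
  ext j
  simp only [toPerm_apply, Finset.mem_filter, Finset.mem_univ, true_and, Finset.mem_image, ne_eq,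
    EmbeddingLike.apply_eq_iff_eq]
  constructor
  · intro h
    exact ⟨σ⁻¹ j, h, by simp⟩
  · rintro ⟨k, hk, rfl⟩
    simpa using hk

lemma hammingDist_toPerm {m : ℕ} {Q : Type*} [DecidableEq Q] (g : Fin m → Equiv.Perm Q)
    (σ : Equiv.Perm (Fin m)) (α β : Fin m → Q) :
    hammingDist (toPerm g σ α) (toPerm g σ β) = hammingDist α β := by
  unfold hammingDist
  rw [diff_toPerm, Finset.card_image_of_injective _ σ.injective]

/-- Balls of radius `i` around distinct codewords are disjoint when `2 i < δ`. -/
lemma eq_of_hammingDist_le {m : ℕ} {Q : Type*} [DecidableEq Q] {C : Set (Fin m → Q)} {δ i : ℕ}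
    (hδ : IsMinDist C δ) (hi : 2 * i < δ) {α β γ : Fin m → Q} (hα : α ∈ C) (hβ : β ∈ C)
    (h1 : hammingDist γ α ≤ i) (h2 : hammingDist γ β ≤ i) : α = β := by
  by_contra hne
  have h3 : δ ≤ hammingDist α β := hδ.2 ⟨α, hα, β, hβ, hne, rfl⟩
  have h4 := hammingDist_triangle α γ β
  rw [hammingDist_comm α γ] at h4
  omega

lemma mem_cell_zero_iff {m : ℕ} {Q : Type*} [DecidableEq Q] {C : Set (Fin m → Q)}
    (hC : C.Nonempty) (γ : Fin m → Q) : γ ∈ cell C 0 ↔ γ ∈ C := by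
  obtain ⟨α, hα⟩ := hC
  have hne : {d | ∃ β ∈ C, hammingDist γ β = d} ≠ ∅ :=
    Set.Nonempty.ne_empty ⟨_, α, hα, rfl⟩
  simp [cell, distTo, Nat.sInf_eq_zero, hne]

/-- Changing a codeword in exactly the coordinates of `I`, with `2 |I| < δ`, gives a vertex of the
cell `C_i`, where `i = |I|`. -/
lemma exists_neighbour {m : ℕ} {Q : Type*} [DecidableEq Q] [Nontrivial Q]
    {C : Set (Fin m → Q)} {δ : ℕ} (hδ : IsMinDist C δ) (I : Finset (Fin m))
    (hI : 2 * I.card < δ) {α : Fin m → Q} (hα : α ∈ C) :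
    ∃ α' ∈ cell C I.card, Finset.univ.filter (fun j => α' j ≠ α j) = I := by
  choose f hf using fun a : Q => exists_ne a
  have hdiff : Finset.univ.filter (fun j => (if j ∈ I then f (α j) else α j) ≠ α j) = I := by
    ext j
    by_cases hj : j ∈ I <;> simp [hj, hf]
  refine ⟨fun j => if j ∈ I then f (α j) else α j, ?_, hdiff⟩
  have hd : hammingDist (fun j => if j ∈ I then f (α j) else α j) α = I.card :=
    congrArg Finset.card hdiff
  refine le_antisymm (Nat.sInf_le ⟨α, hα, hd⟩) (le_csInf ⟨_, α, hα, rfl⟩ ?_)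
  rintro _ ⟨β, hβ, rfl⟩
  by_contra! hlt
  have := eq_of_hammingDist_le hδ hI hα hβ hd.le hlt.le
  subst this
  omega

lemma IsOrbitOf.exists_map {m : ℕ} {Q : Type*} {X : Subgroup (Equiv.Perm (Fin m → Q))}
    {S : Set (Fin m → Q)} (h : IsOrbitOf X S) {α β : Fin m → Q} (hα : α ∈ S) (hβ : β ∈ S) :
    ∃ x ∈ X, x α = β := by
  obtain ⟨γ, rfl⟩ := h
  obtain ⟨x, hx, rfl⟩ := hα
  obtain ⟨y, hy, rfl⟩ := hβ
  exact ⟨y * x⁻¹, X.mul_mem hy (X.inv_mem hx), by simp⟩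

lemma IsOrbitOf.map_mem {m : ℕ} {Q : Type*} {X : Subgroup (Equiv.Perm (Fin m → Q))}
    {S : Set (Fin m → Q)} (h : IsOrbitOf X S) {α : Fin m → Q} (hα : α ∈ S)
    {x : Equiv.Perm (Fin m → Q)} (hx : x ∈ X) : x α ∈ S := by
  obtain ⟨γ, rfl⟩ := h
  obtain ⟨y, hy, rfl⟩ := hα
  exact ⟨x * y, X.mul_mem hx hy, rfl⟩

end CTC

open CTC in
/-- Corollary 2.6: for an `(X,s)`-neighbour transitive code and
`i ≤ min(s, ⌊(δ-1)/2⌋)`, the setwise stabiliser of any `i`-subset of the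
coordinates acts transitively on `C`. -/
theorem statement5 {m : ℕ} {Q : Type*} [Fintype Q] [DecidableEq Q]
    (hm : 2 ≤ m) (hq2 : 2 ≤ Fintype.card Q)
    (C : Set (Fin m → Q)) (hC : 2 ≤ C.ncard)
    (X : Subgroup (Equiv.Perm (Fin m → Q))) (hX : X ≤ AutG m Q)
    (s : ℕ) (hs : s ≤ covRad C) (hNT : IsNT C X s)
    (δ : ℕ) (hδ : IsMinDist C δ)
    (i : ℕ) (hi : i ≤ min s ((δ - 1) / 2)) :
    ∀ I : Finset (Fin m), I.card = i →
      ∀ α ∈ C, ∀ β ∈ C,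
        ∃ (g : Fin m → Equiv.Perm Q) (σ : Equiv.Perm (Fin m)),
          toPerm g σ ∈ X ∧ I.image σ = I ∧ toPerm g σ α = β := by
  rintro I rfl α hα β hβ
  have : Nontrivial Q := Fintype.one_lt_card_iff_nontrivial.mp hq2
  -- The truncated subtraction in `(δ - 1) / 2` is harmless because `δ` is positive.
  have hδ0 : 0 < δ := by
    obtain ⟨⟨a, -, b, -, hab, rfl⟩, -⟩ := hδ
    exact hammingDist_pos.mpr hab
  have hIδ : 2 * I.card < δ := by omega
  obtain ⟨α', hα', hdα⟩ := exists_neighbour hδ I hIδ hα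
  obtain ⟨β', hβ', hdβ⟩ := exists_neighbour hδ I hIδ hβ
  obtain ⟨x, hx, hxα'⟩ := (hNT I.card (by omega)).exists_map hα' hβ'
  obtain ⟨g, σ, rfl⟩ := hX hx
  have hxα : toPerm g σ α ∈ C :=
    (mem_cell_zero_iff ⟨α, hα⟩ _).mp
      ((hNT 0 (Nat.zero_le s)).map_mem ((mem_cell_zero_iff ⟨α, hα⟩ _).mpr hα) hx)
  have hαβ : toPerm g σ α = β := by
    refine eq_of_hammingDist_le (γ := β') hδ hIδ hxα hβ ?_ ?_
    · rw [← hxα', hammingDist_toPerm]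
      exact (congrArg Finset.card hdα).le
    · exact (congrArg Finset.card hdβ).le
  refine ⟨g, σ, hx, ?_, hαβ⟩
  have h := diff_toPerm g σ α' α
  rw [hxα', hαβ, hdα, hdβ] at h
  exact h.symm
end

section
/- Let C be a completely regular code in H(m,q) with m ≥ 5, |C| ≥ 2 and minimum distance δ ≥ 2. Then |C| = 2 if and only if δ = m. -/
namespace CTC

variable {m : ℕ} {Q : Type*} [DecidableEq Q]

lemma distTo_eq {C : Set (Fin m → Q)} {γ α : Fin m → Q} {d : ℕ} (hα : α ∈ C)
    (h : hammingDist γ α = d) (hle : ∀ x ∈ C, d ≤ hammingDist γ x) : distTo C γ = d := by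
  refine IsLeast.csInf_eq ⟨⟨α, hα, h⟩, ?_⟩
  rintro _ ⟨x, hx, rfl⟩
  exact hle x hx

lemma distTo_le_covRad {C : Set (Fin m → Q)} {α : Fin m → Q} (hα : α ∈ C) (γ : Fin m → Q) :
    distTo C γ ≤ covRad C := by
  refine le_csSup ⟨m, ?_⟩ ⟨γ, rfl⟩
  rintro _ ⟨γ', rfl⟩
  have h1 : distTo C γ' ≤ hammingDist γ' α := Nat.sInf_le ⟨α, hα, rfl⟩
  have h2 : hammingDist γ' α ≤ Fintype.card (Fin m) := hammingDist_le_card_fintype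
  simp only [Fintype.card_fin] at h2
  omega

/-- In a completely regular code, which distances to codewords occur at a vertex depends only on
the distance of that vertex from the code. -/
lemma IsCR.exists_hammingDist_eq [Finite Q] {C : Set (Fin m → Q)} (hC : IsCR C)
    {γ₁ γ₂ β : Fin m → Q} (h : distTo C γ₁ = distTo C γ₂) (hβ : β ∈ C) :
    ∃ x ∈ C, hammingDist γ₂ x = hammingDist γ₁ β := by
  have hk : hammingDist γ₁ β ≤ m := by
    simpa using hammingDist_le_card_fintype (x := γ₁) (y := β)
  have hcard := hC _ (distTo_le_covRad hβ γ₁) _ hk γ₁ rfl γ₂ h.symm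
  have hpos : 0 < (sphere γ₁ (hammingDist γ₁ β) ∩ C).ncard :=
    (Set.ncard_pos (Set.toFinite _)).2 ⟨β, rfl, hβ⟩
  rw [hcard, Set.ncard_pos (Set.toFinite _)] at hpos
  obtain ⟨x, hx, hxC⟩ := hpos
  exact ⟨x, hxC, hx⟩

lemma hammingDist_update (α β : Fin m → Q) (i : Fin m) (b : Q) :
    hammingDist (Function.update α i b) β + (if α i ≠ β i then 1 else 0) =
      hammingDist α β + (if b ≠ β i then 1 else 0) := by
  simp only [hammingDist, Finset.card_filter]
  rw [← Finset.add_sum_erase _ _ (Finset.mem_univ i),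
    ← Finset.add_sum_erase Finset.univ (fun j => if α j ≠ β j then 1 else 0) (Finset.mem_univ i)]
  have : ∑ x ∈ Finset.univ.erase i, (if Function.update α i b x ≠ β x then 1 else 0) =
      ∑ x ∈ Finset.univ.erase i, (if α x ≠ β x then 1 else 0) := by
    refine Finset.sum_congr rfl fun x hx => ?_
    rw [Function.update_of_ne (Finset.ne_of_mem_erase hx)]
  rw [this, Function.update_self]
  ring

lemma ne_of_hammingDist_eq {α β : Fin m → Q} (h : hammingDist α β = m) (i : Fin m) :
    α i ≠ β i := by
  have h' : (Finset.univ.filter fun i => α i ≠ β i).card = (Finset.univ : Finset (Fin m)).card := by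
    simpa [hammingDist] using h
  exact Finset.card_filter_eq_iff.1 h' i (Finset.mem_univ i)

/-- Two codewords forming a completely regular code with `δ ≥ 2` disagree in every entry. -/
lemma hammingDist_eq_of_pair [Finite Q] [Nontrivial Q] {α β : Fin m → Q}
    (h2 : 2 ≤ hammingDist α β) (hcr : IsCR {α, β}) : hammingDist α β = m := by
  by_contra hne
  obtain ⟨j, hj⟩ : ∃ j, α j = β j := by
    by_contra! hall
    exact hne (by simp [hammingDist, hall])
  obtain ⟨i, hi⟩ : ∃ i, α i ≠ β i := by
    by_contra! hall
    rw [funext hall, hammingDist_self] at h2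
    omega
  obtain ⟨c, hc⟩ := exists_ne (α j)
  have a1 := hammingDist_update α α j c
  have a2 := hammingDist_update α β j c
  have b1 := hammingDist_update α α i (β i)
  have b2 := hammingDist_update α β i (β i)
  simp [hc] at a1
  simp [hj, hj ▸ hc] at a2
  simp [hi.symm] at b1
  simp [hi] at b2
  have hd1 : distTo {α, β} (Function.update α j c) = 1 := by
    refine distTo_eq (Set.mem_insert _ _) a1 ?_
    rintro x (rfl | rfl) <;> omega
  have hd2 : distTo {α, β} (Function.update α i (β i)) = 1 := by
    refine distTo_eq (Set.mem_insert _ _) b1 ?_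
    rintro x (rfl | rfl) <;> omega
  obtain ⟨x, hx, hxd⟩ := hcr.exists_hammingDist_eq (hd1.trans hd2.symm)
    (show β ∈ ({α, β} : Set _) from Or.inr rfl)
  rcases hx with rfl | rfl <;> omega

/-- A completely regular code whose codewords pairwise disagree in every entry does not contain
three codewords. -/
lemma not_three_of_hammingDist_eq [Finite Q] (hm : 5 ≤ m) {C : Set (Fin m → Q)}
    (hd : ∀ x ∈ C, ∀ y ∈ C, x ≠ y → hammingDist x y = m) (hcr : IsCR C)
    {α β η : Fin m → Q} (hα : α ∈ C) (hβ : β ∈ C) (hη : η ∈ C)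
    (hαβ : α ≠ β) (hαη : α ≠ η) (hβη : β ≠ η) : False := by
  have dne : ∀ x ∈ C, ∀ y ∈ C, x ≠ y → ∀ i, x i ≠ y i := fun x hx y hy hxy =>
    ne_of_hammingDist_eq (hd x hx y hy hxy)
  let i : Fin m := ⟨0, by omega⟩
  let j : Fin m := ⟨1, by omega⟩
  have hji : j ≠ i := by simp [i, j]
  -- The distance to `x` of `α` with entries `i`, `j` replaced by `b`, `c`.
  have key : ∀ (b c : Q) (x : Fin m → Q),
      hammingDist (Function.update (Function.update α i b) j c) x +
        (if α i ≠ x i then 1 else 0) + (if α j ≠ x j then 1 else 0) =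
      hammingDist α x + (if b ≠ x i then 1 else 0) + (if c ≠ x j then 1 else 0) := by
    intro b c x
    have h1 := hammingDist_update α x i b
    have h2 := hammingDist_update (Function.update α i b) x j c
    rw [Function.update_of_ne hji] at h2
    omega
  have two : ∀ b c, b ≠ α i → c ≠ α j →
      hammingDist (Function.update (Function.update α i b) j c) α = 2 := by
    intro b c hb hc
    simpa [hb, hc] using key b c α
  have far : ∀ b c, ∀ x ∈ C, α ≠ x →
      hammingDist (Function.update (Function.update α i b) j c) x + 2 =
        m + (if b ≠ x i then 1 else 0) + (if c ≠ x j then 1 else 0) := by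
    intro b c x hx hαx
    have h := key b c x
    rw [if_pos (dne α hα x hx hαx i), if_pos (dne α hα x hx hαx j), hd α hα x hx hαx] at h
    omega
  have dist2 : ∀ b c, b ≠ α i → c ≠ α j →
      distTo C (Function.update (Function.update α i b) j c) = 2 := by
    intro b c hb hc
    refine distTo_eq hα (two b c hb hc) fun x hx => ?_
    by_cases hαx : α = x
    · rw [← hαx, two b c hb hc]
    · have := far b c x hx hαx
      omega
  have hβi := (dne α hα β hβ hαβ i).symm
  obtain ⟨x, hx, hxd⟩ := hcr.exists_hammingDist_eq
    ((dist2 (β i) (β j) hβi (dne α hα β hβ hαβ j).symm).trans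
      (dist2 (β i) (η j) hβi (dne α hα η hη hαη j).symm).symm) hβ
  have hk := far (β i) (β j) β hβ hαβ
  simp only [ne_eq, not_true_eq_false, if_false] at hk
  by_cases hαx : α = x
  · rw [← hαx, two (β i) (η j) hβi (dne α hα η hη hαη j).symm] at hxd
    omega
  · have h := far (β i) (η j) x hx hαx
    by_cases hβx : β = x
    · rw [← hβx, if_pos (dne η hη β hβ hβη.symm j)] at h
      rw [← hβx] at hxd
      omega
    · rw [if_pos (dne β hβ x hx hβx i)] at h
      omega

end CTC

open CTC in
/-- Lemma 2.13: a completely regular code with `m ≥ 5` and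
`δ ≥ 2` has `|C| = 2` if and only if `δ = m`. -/
theorem statement11 {m q : ℕ} {Q : Type*} [Fintype Q] [DecidableEq Q]
    (hm : 5 ≤ m) (hq2 : 2 ≤ q) (hcard : Fintype.card Q = q)
    (C : Set (Fin m → Q)) (hC : 2 ≤ C.ncard)
    (δ : ℕ) (hδ : IsMinDist C δ) (hδ2 : 2 ≤ δ)
    (hcr : IsCR C) :
    C.ncard = 2 ↔ δ = m := by
  constructor
  · intro h
    obtain ⟨α, β, hne, rfl⟩ := Set.ncard_eq_two.1 h
    have : Nontrivial Q := Fintype.one_lt_card_iff_nontrivial.1 (by omega)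
    have hle : δ ≤ hammingDist α β := hδ.2 ⟨α, Or.inl rfl, β, Or.inr rfl, hne, rfl⟩
    have hαβ : hammingDist α β = m := hammingDist_eq_of_pair (hδ2.trans hle) hcr
    obtain ⟨x, hx, y, hy, hxy, hxyd⟩ := hδ.1
    rcases hx with rfl | rfl <;> rcases hy with rfl | rfl
    · exact absurd rfl hxy
    · omega
    · rw [hammingDist_comm] at hxyd
      omega
    · exact absurd rfl hxy
  · rintro rfl
    by_contra hne
    obtain ⟨α, β, η, hα, hβ, hη, hαβ, hαη, hβη⟩ :=
      (Set.two_lt_ncard_iff (Set.toFinite C)).1 (by omega)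
    refine not_three_of_hammingDist_eq hm (fun x hx y hy hxy => ?_) hcr hα hβ hη hαβ hαη hβη
    refine le_antisymm ?_ (hδ.2 ⟨x, hx, y, hy, hxy, rfl⟩)
    simpa using hammingDist_le_card_fintype (x := x) (y := y)
end
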